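/- Fix 0 < s < Q, and define y_Q(c) for c > 0 to be the maximum of the second coordinates of points of C(O,Q) ∩ C(p_c,s) if this intersection is nonempty, and 0 otherwise. Then y_Q is strictly increasing on the interval [Q − s, √(Q² − s²)]. -/

import Mathlib

open Set Metric
open scoped Classical

/-- The point `(c, 0)` in the Euclidean plane. -/
noncomputable def pc (c : ℝ) : EuclideanSpace ℝ (Fin 2) :=
  (WithLp.equiv 2 (Fin 2 → ℝ)).symm ![c, 0]

/-!
The line through the common points of `C(O,Q)` and `C((c,0),s)` is their radical axis, which is the
vertical line of abscissa `x(c) = (c² + Q² - s²) / (2c) = (c + (Q² - s²)/c) / 2`, so that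
`y_Q(c) = √(Q² - x(c)²)`. The function `x` is strictly decreasing up to `√(Q² - s²)`, where its two
summands balance, and takes values in `[0, Q]` on the interval, so `y_Q` is strictly increasing.
-/

/-- The abscissa of the radical axis of the circles of radii `Q` and `s` centred at the origin and
at `(c, 0)`. It is meaningful only for `c ≠ 0`: concentric circles have no radical axis, and the
formula then gives `0`. -/
noncomputable def radicalAbscissa (Q s c : ℝ) : ℝ :=
  (c ^ 2 + Q ^ 2 - s ^ 2) / (2 * c)

theorem mem_sphere_pc_iff {c r : ℝ} (hr : 0 ≤ r) {p : EuclideanSpace ℝ (Fin 2)} :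
    p ∈ sphere (pc c) r ↔ (p 0 - c) ^ 2 + p 1 ^ 2 = r ^ 2 := by
  rw [mem_sphere, EuclideanSpace.dist_eq, Real.sqrt_eq_iff_eq_sq (by positivity) hr]
  simp [Fin.sum_univ_two, Real.dist_eq, sq_abs, pc]

theorem mem_sphere_zero_inter_sphere_pc_iff {Q s c : ℝ} (hQ : 0 ≤ Q) (hs : 0 ≤ s) (hc : c ≠ 0)
    {p : EuclideanSpace ℝ (Fin 2)} :
    p ∈ sphere (0 : EuclideanSpace ℝ (Fin 2)) Q ∩ sphere (pc c) s ↔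
      p 0 = radicalAbscissa Q s c ∧ p 1 ^ 2 = Q ^ 2 - radicalAbscissa Q s c ^ 2 := by
  have mem_sphere_zero : p ∈ sphere (0 : EuclideanSpace ℝ (Fin 2)) Q ↔
      p 0 ^ 2 + p 1 ^ 2 = Q ^ 2 := by
    simp [EuclideanSpace.sphere_zero_eq Q hQ, Fin.sum_univ_two]
  have eq_abscissa : p 0 = radicalAbscissa Q s c ↔ p 0 * (2 * c) = c ^ 2 + Q ^ 2 - s ^ 2 :=
    eq_div_iff (mul_ne_zero two_ne_zero hc)
  rw [mem_inter_iff, mem_sphere_zero, mem_sphere_pc_iff hs]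
  constructor
  · rintro ⟨hpQ, hps⟩
    have hp : p 0 = radicalAbscissa Q s c := eq_abscissa.2 (by linarith)
    exact ⟨hp, by rw [← hp]; linarith⟩
  · rintro ⟨hp, hp_sq⟩
    rw [← hp] at hp_sq
    exact ⟨by linarith, by linarith [eq_abscissa.1 hp]⟩

theorem isGreatest_ordinate_sphere_zero_inter_sphere_pc {Q s c : ℝ} (hQ : 0 ≤ Q) (hs : 0 ≤ s)
    (hc : c ≠ 0) (hx : radicalAbscissa Q s c ^ 2 ≤ Q ^ 2) :
    IsGreatest ((fun p : EuclideanSpace ℝ (Fin 2) => p 1) ''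
        (sphere (0 : EuclideanSpace ℝ (Fin 2)) Q ∩ sphere (pc c) s))
      √(Q ^ 2 - radicalAbscissa Q s c ^ 2) := by
  refine ⟨⟨!₂[radicalAbscissa Q s c, √(Q ^ 2 - radicalAbscissa Q s c ^ 2)], ?_, by simp⟩, ?_⟩
  · rw [mem_sphere_zero_inter_sphere_pc_iff hQ hs hc]
    simp [Real.sq_sqrt (sub_nonneg.2 hx)]
  · rintro _ ⟨p, hp, rfl⟩
    exact Real.le_sqrt_of_sq_le ((mem_sphere_zero_inter_sphere_pc_iff hQ hs hc).1 hp).2.le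

theorem radicalAbscissa_nonneg {Q s c : ℝ} (hsQ : s ^ 2 ≤ Q ^ 2) (hc : 0 ≤ c) :
    0 ≤ radicalAbscissa Q s c :=
  div_nonneg (by linarith [sq_nonneg c]) (by positivity)

theorem radicalAbscissa_le_iff {Q s c : ℝ} (hc : 0 < c) :
    radicalAbscissa Q s c ≤ Q ↔ (Q - c) ^ 2 ≤ s ^ 2 := by
  rw [radicalAbscissa, div_le_iff₀ (by positivity)]
  constructor <;> intro h <;> linarith

theorem strictAntiOn_radicalAbscissa (Q s : ℝ) :
    StrictAntiOn (radicalAbscissa Q s) (Ioc 0 √(Q ^ 2 - s ^ 2)) := by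
  rintro a ⟨ha, -⟩ b ⟨hb, hb_le⟩ hab
  have mul_lt : a * b < Q ^ 2 - s ^ 2 := calc
    a * b < b ^ 2 := by rw [sq]; gcongr
    _ ≤ Q ^ 2 - s ^ 2 := (Real.le_sqrt' hb).1 hb_le
  have sub_eq : radicalAbscissa Q s a - radicalAbscissa Q s b =
      (b - a) * (Q ^ 2 - s ^ 2 - a * b) / (2 * (a * b)) := by
    unfold radicalAbscissa
    field_simp
    ring
  rw [← sub_pos, sub_eq]
  exact div_pos (mul_pos (sub_pos.2 hab) (sub_pos.2 mul_lt)) (by positivity)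

theorem strictAntiOn_sqrt_sq_sub_sq (r : ℝ) :
    StrictAntiOn (fun x : ℝ => √(r ^ 2 - x ^ 2)) (Icc 0 r) := by
  rintro x ⟨hx, -⟩ y ⟨hy, hyr⟩ hxy
  have y_sq_le : y ^ 2 ≤ r ^ 2 := by gcongr
  exact Real.sqrt_lt_sqrt (sub_nonneg.2 y_sq_le) (by gcongr)

theorem mapsTo_radicalAbscissa {Q s : ℝ} (hs : 0 ≤ s) (hsQ : s < Q) :
    MapsTo (radicalAbscissa Q s) (Icc (Q - s) √(Q ^ 2 - s ^ 2)) (Icc 0 Q) := by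
  rintro c ⟨hc_ge, hc_le⟩
  have hc : 0 < c := (sub_pos.2 hsQ).trans_le hc_ge
  have hcQ : c ≤ Q := hc_le.trans <|
    Real.sqrt_le_iff.2 ⟨hs.trans hsQ.le, sub_le_self _ (sq_nonneg s)⟩
  have sub_sq_le : (Q - c) ^ 2 ≤ s ^ 2 :=
    pow_le_pow_left₀ (sub_nonneg.2 hcQ) (by linarith) 2
  exact ⟨radicalAbscissa_nonneg (pow_le_pow_left₀ hs hsQ.le 2) hc.le,
    (radicalAbscissa_le_iff hc).2 sub_sq_le⟩

/-- For `0 < s < Q`, the function `y_Q`, sending `c` to the maximal second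
coordinate of a point of `C(O,Q) ∩ C((c,0),s)` (or `0` if the intersection is empty), is
strictly increasing on `[Q - s, √(Q² - s²)]`. -/
theorem yQ_strictMonoOn
    (Q s : ℝ) (hs : 0 < s) (hsQ : s < Q)
    (yQ : ℝ → ℝ)
    (hyQ : ∀ c, yQ c =
      if (sphere (0 : EuclideanSpace ℝ (Fin 2)) Q ∩ sphere (pc c) s).Nonempty then
        sSup ((fun p : EuclideanSpace ℝ (Fin 2) => p 1) ''
          (sphere (0 : EuclideanSpace ℝ (Fin 2)) Q ∩ sphere (pc c) s))
      else 0) :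
    StrictMonoOn yQ (Icc (Q - s) (Real.sqrt (Q ^ 2 - s ^ 2))) := by
  have pos : ∀ c ∈ Icc (Q - s) √(Q ^ 2 - s ^ 2), 0 < c := fun c hc =>
    (sub_pos.2 hsQ).trans_le hc.1
  have abscissa_mem : MapsTo (radicalAbscissa Q s) (Icc (Q - s) √(Q ^ 2 - s ^ 2)) (Icc 0 Q) :=
    mapsTo_radicalAbscissa hs.le hsQ
  have abscissa_anti : StrictAntiOn (radicalAbscissa Q s) (Icc (Q - s) √(Q ^ 2 - s ^ 2)) :=
    (strictAntiOn_radicalAbscissa Q s).mono fun c hc => ⟨pos c hc, hc.2⟩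
  refine ((strictAntiOn_sqrt_sq_sub_sq Q).comp abscissa_anti abscissa_mem).congr fun c hc => ?_
  obtain ⟨abscissa_nonneg, abscissa_le⟩ := abscissa_mem hc
  have greatest := isGreatest_ordinate_sphere_zero_inter_sphere_pc (hs.trans hsQ).le hs.le
    (pos c hc).ne' (pow_le_pow_left₀ abscissa_nonneg abscissa_le 2)
  rw [hyQ, if_pos greatest.nonempty.of_image, greatest.csSup_eq, Function.comp_apply]
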